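/- arXiv:1511.08824 — 4 statements merged into one kernel-verified Lean document; each statement's English description precedes it below -/
import Mathlib

section
/- Let ε > 0 and let η, v : ℝ × ℝ → ℝ (time × space) be C^∞ functions with 1 + ε·η(t,x) > 0 for all (t,x), satisfying ∂_t η + ∂_x v = 0 and ∂_t v + (1+εη)∂_x η − ε(1+εη)∂_x³η + ε ∂_x( v²/(1+εη) ) = 0 for all (t,x). Then for all (t,x): ∂_t²η − ∂_x((1+εη)∂_xη) + ε ∂_x((1+εη)∂_x³η) + (2εv/(1+εη))·∂_t∂_xη = f, where f = 2ε(∂_xv)²/(1+εη) − 2ε² v (∂_xv)(∂_xη)/(1+εη)² − ε² ∂_x( (∂_xη)·v²/(1+εη)² ). -/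
/-- Partial derivative in the first (time) variable of `f : ℝ → ℝ → ℝ`. -/
noncomputable def dt1 (f : ℝ → ℝ → ℝ) : ℝ → ℝ → ℝ := fun t x => deriv (fun s => f s x) t

/-- Partial derivative in the second (space) variable of `f : ℝ → ℝ → ℝ`. -/
noncomputable def dx1 (f : ℝ → ℝ → ℝ) : ℝ → ℝ → ℝ := fun t x => deriv (fun y => f t y) x

/-- Joint smoothness. -/
def Sm (f : ℝ → ℝ → ℝ) : Prop := ContDiff ℝ (⊤ : ℕ∞) fun p : ℝ × ℝ => f p.1 p.2

theorem Sm.hx {f : ℝ → ℝ → ℝ} (h : Sm f) (t x : ℝ) :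
    HasDerivAt (fun y => f t y) (dx1 f t x) x := by
  have h1 : ContDiff ℝ (⊤ : ℕ∞) (fun y : ℝ => f t y) :=
    ContDiff.comp (g := fun p : ℝ × ℝ => f p.1 p.2) (f := fun y : ℝ => (t, y)) h
      (contDiff_const.prodMk contDiff_id)
  exact ((h1.differentiable (by simp)) x).hasDerivAt

theorem Sm.dx_eq {f : ℝ → ℝ → ℝ} (h : Sm f) (t x : ℝ) :
    dx1 f t x = fderiv ℝ (fun p : ℝ × ℝ => f p.1 p.2) (t, x) (0, 1) := by
  have h1 := ((ContDiff.differentiable h (by simp)) (t, x)).hasFDerivAt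
  have h2 : HasDerivAt (fun y : ℝ => (t, y)) ((0 : ℝ), (1 : ℝ)) x :=
    (hasDerivAt_const x t).prodMk (hasDerivAt_id x)
  exact (h1.comp_hasDerivAt x h2).deriv

theorem Sm.dt_eq {f : ℝ → ℝ → ℝ} (h : Sm f) (t x : ℝ) :
    dt1 f t x = fderiv ℝ (fun p : ℝ × ℝ => f p.1 p.2) (t, x) (1, 0) := by
  have h1 := ((ContDiff.differentiable h (by simp)) (t, x)).hasFDerivAt
  have h2 : HasDerivAt (fun s : ℝ => (s, x)) ((1 : ℝ), (0 : ℝ)) t :=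
    (hasDerivAt_id t).prodMk (hasDerivAt_const t x)
  exact (h1.comp_hasDerivAt t h2).deriv

theorem Sm.fd {f : ℝ → ℝ → ℝ} (h : Sm f) :
    ContDiff ℝ (⊤ : ℕ∞) (fderiv ℝ (fun p : ℝ × ℝ => f p.1 p.2)) :=
  ContDiff.fderiv_right h (by simp)

theorem Sm.dx {f : ℝ → ℝ → ℝ} (h : Sm f) : Sm (dx1 f) := by
  have : (fun p : ℝ × ℝ => dx1 f p.1 p.2) =
      fun p => fderiv ℝ (fun p : ℝ × ℝ => f p.1 p.2) p (0, 1) := by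
    funext p; exact h.dx_eq p.1 p.2
  unfold Sm
  rw [this]
  exact h.fd.clm_apply contDiff_const

theorem Sm.dt {f : ℝ → ℝ → ℝ} (h : Sm f) : Sm (dt1 f) := by
  have : (fun p : ℝ × ℝ => dt1 f p.1 p.2) =
      fun p => fderiv ℝ (fun p : ℝ × ℝ => f p.1 p.2) p (1, 0) := by
    funext p; exact h.dt_eq p.1 p.2
  unfold Sm
  rw [this]
  exact h.fd.clm_apply contDiff_const

theorem Sm.symm {f : ℝ → ℝ → ℝ} (h : Sm f) (t x : ℝ) :
    dt1 (dx1 f) t x = dx1 (dt1 f) t x := by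
  have e1 : (fun p : ℝ × ℝ => dx1 f p.1 p.2) =
      fun p => fderiv ℝ (fun p : ℝ × ℝ => f p.1 p.2) p (0, 1) := by
    funext p; exact h.dx_eq p.1 p.2
  have e2 : (fun p : ℝ × ℝ => dt1 f p.1 p.2) =
      fun p => fderiv ℝ (fun p : ℝ × ℝ => f p.1 p.2) p (1, 0) := by
    funext p; exact h.dt_eq p.1 p.2
  have hd := ((h.fd.differentiable (by simp)) (t, x))
  rw [h.dx.dt_eq, h.dt.dx_eq, e1, e2, fderiv_clm_apply hd (by fun_prop),
    fderiv_clm_apply hd (by fun_prop)]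
  have hs : IsSymmSndFDerivAt ℝ (fun p : ℝ × ℝ => f p.1 p.2) (t, x) :=
    (ContDiff.contDiffAt h).isSymmSndFDerivAt (by
      rw [minSmoothness_of_isRCLikeNormedField]
      exact WithTop.coe_le_coe.2 (le_top : (2 : ℕ∞) ≤ ⊤))
  simpa using hs (1, 0) (0, 1)

/-- The quasilinearized `η`-equation (Step 2 of the proof of Theorem 4.6): for smooth
solutions of the reduced system `η_t + v_x = 0`,
`v_t + (1+εη)η_x - ε(1+εη)η_{xxx} + ε(v²/(1+εη))_x = 0` with `1+εη > 0`, one has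
`η_{tt} - ((1+εη)η_x)_x + ε((1+εη)η_{xxx})_x + (2εv/(1+εη)) ∂_t∂_x η = f`. -/
theorem quasilinear_eta_1d (ε : ℝ) (hε : 0 < ε) (η v : ℝ → ℝ → ℝ)
    (hη : ContDiff ℝ (⊤ : ℕ∞) fun p : ℝ × ℝ => η p.1 p.2)
    (hv : ContDiff ℝ (⊤ : ℕ∞) fun p : ℝ × ℝ => v p.1 p.2)
    (hpos : ∀ t x, 0 < 1 + ε * η t x)
    (heq1 : ∀ t x, dt1 η t x + dx1 v t x = 0)
    (heq2 : ∀ t x, dt1 v t x + (1 + ε * η t x) * dx1 η t x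
      - ε * (1 + ε * η t x) * dx1 (dx1 (dx1 η)) t x
      + ε * dx1 (fun t x => v t x ^ 2 / (1 + ε * η t x)) t x = 0) :
    ∀ t x,
      dt1 (dt1 η) t x - dx1 (fun t x => (1 + ε * η t x) * dx1 η t x) t x
        + ε * dx1 (fun t x => (1 + ε * η t x) * dx1 (dx1 (dx1 η)) t x) t x
        + (2 * ε * v t x / (1 + ε * η t x)) * dt1 (dx1 η) t x
      = 2 * ε * dx1 v t x ^ 2 / (1 + ε * η t x)
        - 2 * ε ^ 2 * v t x * dx1 v t x * dx1 η t x / (1 + ε * η t x) ^ 2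
        - ε ^ 2 * dx1 (fun t x => dx1 η t x * v t x ^ 2 / (1 + ε * η t x) ^ 2) t x := by

  intro t x
  have Sη : Sm η := hη
  have Sv : Sm v := hv
  have hne : ∀ t x, 1 + ε * η t x ≠ 0 := fun t x => (hpos t x).ne'
  have hh : ∀ t x, HasDerivAt (fun y => 1 + ε * η t y) (ε * dx1 η t x) x := fun t x =>
    ((Sη.hx t x).const_mul ε).const_add 1
  have e1 : dt1 η = fun t x => - dx1 v t x := by
    funext t x; linarith [heq1 t x]
  have htx : dt1 (dx1 η) t x = - dx1 (dx1 v) t x := by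
    rw [Sη.symm, e1]; exact (Sv.dx.hx t x).neg.deriv
  have htt : dt1 (dt1 η) t x = - dx1 (dt1 v) t x := by
    rw [← Sv.symm, e1]
    change deriv (fun s => - dx1 v s x) t = - deriv (fun s => dx1 v s x) t
    exact deriv.fun_neg
  -- first derivative of the flux
  have hq : ∀ t x, dx1 (fun t x => v t x ^ 2 / (1 + ε * η t x)) t x
      = 2 * v t x * dx1 v t x / (1 + ε * η t x)
        - ε * (dx1 η t x * v t x ^ 2 / (1 + ε * η t x) ^ 2) := by
    intro t x
    have := (((Sv.hx t x).fun_pow 2).fun_div (hh t x) (hne t x)).deriv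
    refine this.trans ?_
    have := hne t x
    field_simp
    push_cast
    ring
  have Sg : Sm (fun t x => dx1 η t x * v t x ^ 2 / (1 + ε * η t x) ^ 2) := by
    have a : ContDiff ℝ (⊤ : ℕ∞) fun p : ℝ × ℝ => dx1 η p.1 p.2 := Sη.dx
    exact (a.mul (hv.pow 2)).div ((contDiff_const.add (contDiff_const.mul hη)).pow 2)
      (fun p => pow_ne_zero 2 (hne p.1 p.2))
  have S1 : Sm (fun t x => (1 + ε * η t x) * dx1 η t x) := by
    have a : ContDiff ℝ (⊤ : ℕ∞) fun p : ℝ × ℝ => dx1 η p.1 p.2 := Sη.dx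
    exact (contDiff_const.add (contDiff_const.mul hη)).mul a
  have S3 : Sm (fun t x => (1 + ε * η t x) * dx1 (dx1 (dx1 η)) t x) := by
    have a : ContDiff ℝ (⊤ : ℕ∞) fun p : ℝ × ℝ => dx1 (dx1 (dx1 η)) p.1 p.2 := Sη.dx.dx.dx
    exact (contDiff_const.add (contDiff_const.mul hη)).mul a
  have hvt : dt1 v = fun t x => -((1 + ε * η t x) * dx1 η t x)
      + ε * ((1 + ε * η t x) * dx1 (dx1 (dx1 η)) t x)
      - ε * (2 * v t x * dx1 v t x / (1 + ε * η t x)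
        - ε * (dx1 η t x * v t x ^ 2 / (1 + ε * η t x) ^ 2)) := by
    funext t x
    have := heq2 t x
    rw [hq] at this
    linarith
  have hD := (((S1.hx t x).fun_neg.fun_add ((S3.hx t x).const_mul ε)).fun_sub
    (((((((Sv.hx t x).const_mul 2).fun_mul (Sv.dx.hx t x)).fun_div (hh t x) (hne t x))).fun_sub
      ((Sg.hx t x).const_mul ε)).const_mul ε)).deriv
  have hD' := (congrArg (fun g => dx1 g t x) hvt).trans hD
  beta_reduce at hD'
  rw [htt, htx, hD']
  generalize dx1 (fun t x => dx1 η t x * v t x ^ 2 / (1 + ε * η t x) ^ 2) t x = G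
  generalize dx1 (fun t x => (1 + ε * η t x) * dx1 η t x) t x = A
  generalize dx1 (fun t x => (1 + ε * η t x) * dx1 (dx1 (dx1 η)) t x) t x = B
  have := hne t x
  field_simp
  ring
end

section
/- Let ε > 0 and let η : ℝ × ℝ² → ℝ, v = (v₁,v₂) : ℝ × ℝ² → ℝ² be C^∞ functions with 1 + ε·η(t,x) > 0 for all (t,x), satisfying ∂_t η + ∇·v = 0 and, for i=1,2, ∂_t v_i + (1+εη)∂_i η − ε(1+εη)∂_i Δη + ε Σ_j ∂_j( v_i v_j/(1+εη) ) = 0. Then for all (t,x): ∂_t²η − ∇·((1+εη)∇η) + ε ∇·((1+εη)∇Δη) + (2ε/(1+εη))·v·∇(∂_tη) = f, where f = ε(∇·v)²/(1+εη) + 2ε ( v·∇(1/(1+εη)) )·(∇·v) + ε v·∇( v·∇(1/(1+εη)) ) + ε Σ_{i,j=1,2} ∂_j( v_i/(1+εη) )·∂_i v_j. -/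
/-- Time derivative of `f : ℝ → ℝ → ℝ → ℝ` (time, then two space variables). -/
noncomputable def dt2 (f : ℝ → ℝ → ℝ → ℝ) : ℝ → ℝ → ℝ → ℝ :=
  fun t x y => deriv (fun s => f s x y) t

/-- First space partial derivative. -/
noncomputable def dx2 (f : ℝ → ℝ → ℝ → ℝ) : ℝ → ℝ → ℝ → ℝ :=
  fun t x y => deriv (fun z => f t z y) x

/-- Second space partial derivative. -/
noncomputable def dy2 (f : ℝ → ℝ → ℝ → ℝ) : ℝ → ℝ → ℝ → ℝ :=
  fun t x y => deriv (fun z => f t x z) y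

/-- Spatial Laplacian. -/
noncomputable def lap2 (f : ℝ → ℝ → ℝ → ℝ) : ℝ → ℝ → ℝ → ℝ :=
  fun t x y => dx2 (dx2 f) t x y + dy2 (dy2 f) t x y

/-- Joint smoothness. -/
def SM (f : ℝ → ℝ → ℝ → ℝ) : Prop :=
  ContDiff ℝ (⊤ : ℕ∞) fun p : ℝ × ℝ × ℝ => f p.1 p.2.1 p.2.2

theorem SM.add {f g : ℝ → ℝ → ℝ → ℝ} (hf : SM f) (hg : SM g) :
    SM (fun t x y => f t x y + g t x y) := ContDiff.add hf hg

theorem SM.mul {f g : ℝ → ℝ → ℝ → ℝ} (hf : SM f) (hg : SM g) :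
    SM (fun t x y => f t x y * g t x y) := ContDiff.mul hf hg

theorem SM.const (c : ℝ) : SM (fun _ _ _ => c) := contDiff_const

theorem SM.inv {f : ℝ → ℝ → ℝ → ℝ} (hf : SM f) (h : ∀ t x y, f t x y ≠ 0) :
    SM (fun t x y => (f t x y)⁻¹) := ContDiff.inv hf (fun p => h p.1 p.2.1 p.2.2)

theorem SM.dd {f : ℝ → ℝ → ℝ → ℝ} (hf : SM f) (e : ℝ × ℝ × ℝ) :
    ContDiff ℝ (⊤ : ℕ∞) (fun q : ℝ × ℝ × ℝ =>
      fderiv ℝ (fun p : ℝ × ℝ × ℝ => f p.1 p.2.1 p.2.2) q e) :=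
  (ContDiff.fderiv_right (m := (⊤ : ℕ∞)) hf (by norm_cast)).clm_apply contDiff_const

theorem SM.comm {f : ℝ → ℝ → ℝ → ℝ} (hf : SM f) (e e' q : ℝ × ℝ × ℝ) :
    fderiv ℝ (fun q => fderiv ℝ (fun p : ℝ × ℝ × ℝ => f p.1 p.2.1 p.2.2) q e) q e' =
    fderiv ℝ (fun q => fderiv ℝ (fun p : ℝ × ℝ × ℝ => f p.1 p.2.1 p.2.2) q e') q e := by
  have hd : DifferentiableAt ℝ (fderiv ℝ (fun p : ℝ × ℝ × ℝ => f p.1 p.2.1 p.2.2)) q :=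
    (ContDiff.differentiable (ContDiff.fderiv_right (m := (⊤ : ℕ∞)) hf (by norm_cast)) (by simp)) q
  have hs : IsSymmSndFDerivAt ℝ (fun p : ℝ × ℝ × ℝ => f p.1 p.2.1 p.2.2) q :=
    (ContDiff.contDiffAt hf).isSymmSndFDerivAt (by simp; norm_cast)
  rw [fderiv_clm_apply hd (differentiableAt_const e), fderiv_clm_apply hd (differentiableAt_const e')]
  simpa using hs e' e

theorem SM.has_t {f : ℝ → ℝ → ℝ → ℝ} (hf : SM f) (t x y : ℝ) :
    HasDerivAt (fun s => f s x y) (fderiv ℝ (fun p : ℝ × ℝ × ℝ => f p.1 p.2.1 p.2.2) (t, x, y) (1,0,0)) t := by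
  have h1 : HasFDerivAt (fun p : ℝ × ℝ × ℝ => f p.1 p.2.1 p.2.2) _ (t, x, y) :=
    ((ContDiff.differentiable hf (by simp)) (t, x, y)).hasFDerivAt
  have h2 : HasDerivAt (fun s : ℝ => ((s, x, y) : ℝ × ℝ × ℝ)) (1,0,0) t :=
    (hasDerivAt_id t).prodMk ((hasDerivAt_const t x).prodMk (hasDerivAt_const t y))
  exact HasFDerivAt.comp_hasDerivAt t h1 h2

theorem SM.eq_t {f : ℝ → ℝ → ℝ → ℝ} (hf : SM f) :
    dt2 f = fun t x y => fderiv ℝ (fun p : ℝ × ℝ × ℝ => f p.1 p.2.1 p.2.2) (t, x, y) (1,0,0) := by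
  funext t x y
  exact (hf.has_t t x y).deriv

theorem SM.dt {f : ℝ → ℝ → ℝ → ℝ} (hf : SM f) : SM (dt2 f) := by
  rw [hf.eq_t]
  exact hf.dd (1,0,0)

theorem dt2_add {f g : ℝ → ℝ → ℝ → ℝ} (hf : SM f) (hg : SM g) (t x y : ℝ) :
    dt2 (fun t x y => f t x y + g t x y) t x y = dt2 f t x y + dt2 g t x y :=
  deriv_fun_add (hf.has_t t x y).differentiableAt (hg.has_t t x y).differentiableAt

theorem dt2_mul {f g : ℝ → ℝ → ℝ → ℝ} (hf : SM f) (hg : SM g) (t x y : ℝ) :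
    dt2 (fun t x y => f t x y * g t x y) t x y = dt2 f t x y * g t x y + f t x y * dt2 g t x y :=
  deriv_fun_mul (hf.has_t t x y).differentiableAt (hg.has_t t x y).differentiableAt

theorem dt2_cmul (c : ℝ) {f : ℝ → ℝ → ℝ → ℝ} (hf : SM f) (t x y : ℝ) :
    dt2 (fun t x y => c * f t x y) t x y = c * dt2 f t x y :=
  deriv_const_mul c (hf.has_t t x y).differentiableAt

theorem SM.has_x {f : ℝ → ℝ → ℝ → ℝ} (hf : SM f) (t x y : ℝ) :
    HasDerivAt (fun s => f t s y) (fderiv ℝ (fun p : ℝ × ℝ × ℝ => f p.1 p.2.1 p.2.2) (t, x, y) (0,1,0)) x := by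
  have h1 : HasFDerivAt (fun p : ℝ × ℝ × ℝ => f p.1 p.2.1 p.2.2) _ (t, x, y) :=
    ((ContDiff.differentiable hf (by simp)) (t, x, y)).hasFDerivAt
  have h2 : HasDerivAt (fun s : ℝ => ((t, s, y) : ℝ × ℝ × ℝ)) (0,1,0) x :=
    (hasDerivAt_const x t).prodMk ((hasDerivAt_id x).prodMk (hasDerivAt_const x y))
  exact HasFDerivAt.comp_hasDerivAt x h1 h2

theorem SM.eq_x {f : ℝ → ℝ → ℝ → ℝ} (hf : SM f) :
    dx2 f = fun t x y => fderiv ℝ (fun p : ℝ × ℝ × ℝ => f p.1 p.2.1 p.2.2) (t, x, y) (0,1,0) := by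
  funext t x y
  exact (hf.has_x t x y).deriv

theorem SM.dx {f : ℝ → ℝ → ℝ → ℝ} (hf : SM f) : SM (dx2 f) := by
  rw [hf.eq_x]
  exact hf.dd (0,1,0)

theorem dx2_add {f g : ℝ → ℝ → ℝ → ℝ} (hf : SM f) (hg : SM g) (t x y : ℝ) :
    dx2 (fun t x y => f t x y + g t x y) t x y = dx2 f t x y + dx2 g t x y :=
  deriv_fun_add (hf.has_x t x y).differentiableAt (hg.has_x t x y).differentiableAt

theorem dx2_mul {f g : ℝ → ℝ → ℝ → ℝ} (hf : SM f) (hg : SM g) (t x y : ℝ) :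
    dx2 (fun t x y => f t x y * g t x y) t x y = dx2 f t x y * g t x y + f t x y * dx2 g t x y :=
  deriv_fun_mul (hf.has_x t x y).differentiableAt (hg.has_x t x y).differentiableAt

theorem dx2_cmul (c : ℝ) {f : ℝ → ℝ → ℝ → ℝ} (hf : SM f) (t x y : ℝ) :
    dx2 (fun t x y => c * f t x y) t x y = c * dx2 f t x y :=
  deriv_const_mul c (hf.has_x t x y).differentiableAt

theorem SM.has_y {f : ℝ → ℝ → ℝ → ℝ} (hf : SM f) (t x y : ℝ) :
    HasDerivAt (fun s => f t x s) (fderiv ℝ (fun p : ℝ × ℝ × ℝ => f p.1 p.2.1 p.2.2) (t, x, y) (0,0,1)) y := by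
  have h1 : HasFDerivAt (fun p : ℝ × ℝ × ℝ => f p.1 p.2.1 p.2.2) _ (t, x, y) :=
    ((ContDiff.differentiable hf (by simp)) (t, x, y)).hasFDerivAt
  have h2 : HasDerivAt (fun s : ℝ => ((t, x, s) : ℝ × ℝ × ℝ)) (0,0,1) y :=
    (hasDerivAt_const y t).prodMk ((hasDerivAt_const y x).prodMk (hasDerivAt_id y))
  exact HasFDerivAt.comp_hasDerivAt y h1 h2

theorem SM.eq_y {f : ℝ → ℝ → ℝ → ℝ} (hf : SM f) :
    dy2 f = fun t x y => fderiv ℝ (fun p : ℝ × ℝ × ℝ => f p.1 p.2.1 p.2.2) (t, x, y) (0,0,1) := by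
  funext t x y
  exact (hf.has_y t x y).deriv

theorem SM.dy {f : ℝ → ℝ → ℝ → ℝ} (hf : SM f) : SM (dy2 f) := by
  rw [hf.eq_y]
  exact hf.dd (0,0,1)

theorem dy2_add {f g : ℝ → ℝ → ℝ → ℝ} (hf : SM f) (hg : SM g) (t x y : ℝ) :
    dy2 (fun t x y => f t x y + g t x y) t x y = dy2 f t x y + dy2 g t x y :=
  deriv_fun_add (hf.has_y t x y).differentiableAt (hg.has_y t x y).differentiableAt

theorem dy2_mul {f g : ℝ → ℝ → ℝ → ℝ} (hf : SM f) (hg : SM g) (t x y : ℝ) :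
    dy2 (fun t x y => f t x y * g t x y) t x y = dy2 f t x y * g t x y + f t x y * dy2 g t x y :=
  deriv_fun_mul (hf.has_y t x y).differentiableAt (hg.has_y t x y).differentiableAt

theorem dy2_cmul (c : ℝ) {f : ℝ → ℝ → ℝ → ℝ} (hf : SM f) (t x y : ℝ) :
    dy2 (fun t x y => c * f t x y) t x y = c * dy2 f t x y :=
  deriv_const_mul c (hf.has_y t x y).differentiableAt

theorem comm_tx {f : ℝ → ℝ → ℝ → ℝ} (hf : SM f) (t x y : ℝ) :
    dt2 (dx2 f) t x y = dx2 (dt2 f) t x y := by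
  rw [hf.dx.eq_t, hf.dt.eq_x, hf.eq_t, hf.eq_x]
  exact hf.comm _ _ _

theorem comm_ty {f : ℝ → ℝ → ℝ → ℝ} (hf : SM f) (t x y : ℝ) :
    dt2 (dy2 f) t x y = dy2 (dt2 f) t x y := by
  rw [hf.dy.eq_t, hf.dt.eq_y, hf.eq_t, hf.eq_y]
  exact hf.comm _ _ _

theorem comm_xy {f : ℝ → ℝ → ℝ → ℝ} (hf : SM f) (t x y : ℝ) :
    dx2 (dy2 f) t x y = dy2 (dx2 f) t x y := by
  rw [hf.dy.eq_x, hf.dx.eq_y, hf.eq_x, hf.eq_y]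
  exact hf.comm _ _ _

/-- The 2D quasilinearized `η`-equation (Step 2 of the proof of Theorem 4.7): for smooth
solutions of the reduced system with `1+εη > 0`,
`η_{tt} - ∇·((1+εη)∇η) + ε ∇·((1+εη)∇Δη) + (2ε/(1+εη)) v·∇(η_t) = f`. -/
theorem quasilinear_eta_2d (ε : ℝ) (hε : 0 < ε) (η v₁ v₂ : ℝ → ℝ → ℝ → ℝ)
    (hη : ContDiff ℝ (⊤ : ℕ∞) fun p : ℝ × ℝ × ℝ => η p.1 p.2.1 p.2.2)
    (hv₁ : ContDiff ℝ (⊤ : ℕ∞) fun p : ℝ × ℝ × ℝ => v₁ p.1 p.2.1 p.2.2)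
    (hv₂ : ContDiff ℝ (⊤ : ℕ∞) fun p : ℝ × ℝ × ℝ => v₂ p.1 p.2.1 p.2.2)
    (hpos : ∀ t x y, 0 < 1 + ε * η t x y)
    (heq1 : ∀ t x y, dt2 η t x y + (dx2 v₁ t x y + dy2 v₂ t x y) = 0)
    (heq2x : ∀ t x y, dt2 v₁ t x y + (1 + ε * η t x y) * dx2 η t x y
      - ε * (1 + ε * η t x y) * dx2 (lap2 η) t x y
      + ε * (dx2 (fun t x y => v₁ t x y * v₁ t x y / (1 + ε * η t x y)) t x y
           + dy2 (fun t x y => v₁ t x y * v₂ t x y / (1 + ε * η t x y)) t x y) = 0)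
    (heq2y : ∀ t x y, dt2 v₂ t x y + (1 + ε * η t x y) * dy2 η t x y
      - ε * (1 + ε * η t x y) * dy2 (lap2 η) t x y
      + ε * (dx2 (fun t x y => v₂ t x y * v₁ t x y / (1 + ε * η t x y)) t x y
           + dy2 (fun t x y => v₂ t x y * v₂ t x y / (1 + ε * η t x y)) t x y) = 0) :
    ∀ t x y,
      dt2 (dt2 η) t x y
        - (dx2 (fun t x y => (1 + ε * η t x y) * dx2 η t x y) t x y
           + dy2 (fun t x y => (1 + ε * η t x y) * dy2 η t x y) t x y)
        + ε * (dx2 (fun t x y => (1 + ε * η t x y) * dx2 (lap2 η) t x y) t x y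
             + dy2 (fun t x y => (1 + ε * η t x y) * dy2 (lap2 η) t x y) t x y)
        + (2 * ε / (1 + ε * η t x y)) *
            (v₁ t x y * dx2 (dt2 η) t x y + v₂ t x y * dy2 (dt2 η) t x y)
      = ε * (dx2 v₁ t x y + dy2 v₂ t x y) ^ 2 / (1 + ε * η t x y)
        + 2 * ε * (v₁ t x y * dx2 (fun t x y => (1 + ε * η t x y)⁻¹) t x y
                 + v₂ t x y * dy2 (fun t x y => (1 + ε * η t x y)⁻¹) t x y)
            * (dx2 v₁ t x y + dy2 v₂ t x y)
        + ε * (v₁ t x y *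
              dx2 (fun t x y => v₁ t x y * dx2 (fun t x y => (1 + ε * η t x y)⁻¹) t x y
                 + v₂ t x y * dy2 (fun t x y => (1 + ε * η t x y)⁻¹) t x y) t x y
             + v₂ t x y *
              dy2 (fun t x y => v₁ t x y * dx2 (fun t x y => (1 + ε * η t x y)⁻¹) t x y
                 + v₂ t x y * dy2 (fun t x y => (1 + ε * η t x y)⁻¹) t x y) t x y)
        + ε * (dx2 (fun t x y => v₁ t x y / (1 + ε * η t x y)) t x y * dx2 v₁ t x y
             + dy2 (fun t x y => v₁ t x y / (1 + ε * η t x y)) t x y * dx2 v₂ t x y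
             + dx2 (fun t x y => v₂ t x y / (1 + ε * η t x y)) t x y * dy2 v₁ t x y
             + dy2 (fun t x y => v₂ t x y / (1 + ε * η t x y)) t x y * dy2 v₂ t x y) := by
  intro t x y
  change SM η at hη
  change SM v₁ at hv₁
  change SM v₂ at hv₂
  have hh : SM (fun t x y => 1 + ε * η t x y) := (SM.const 1).add ((SM.const ε).mul hη)
  have hw0 : SM (fun t x y => (1 + ε * η t x y)⁻¹) := hh.inv (fun t x y => (hpos t x y).ne')
  have hl : SM (lap2 η) := hη.dx.dx.add hη.dy.dy
  simp only [div_eq_mul_inv] at heq2x heq2y ⊢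
  generalize hwd : (fun t x y => (1 + ε * η t x y)⁻¹) = w at *
  have hwe : ∀ t x y, (1 + ε * η t x y)⁻¹ = w t x y := fun t x y => by rw [← hwd]
  simp only [hwe] at heq2x heq2y ⊢
  generalize hhd : (fun t x y => 1 + ε * η t x y) = h at *
  have hhe : ∀ t x y, 1 + ε * η t x y = h t x y := fun t x y => by rw [← hhd]
  simp only [hhe] at heq2x heq2y ⊢
  clear hwe hwd hhe hhd hpos
  generalize lap2 η = L at *
  have hA1 := hh.mul hη.dx
  have hA2 := hh.mul hη.dy
  have hB1 := hh.mul hl.dx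
  have hB2 := hh.mul hl.dy
  have h11 := (hv₁.mul hv₁).mul hw0
  have h12 := (hv₁.mul hv₂).mul hw0
  have h21 := (hv₂.mul hv₁).mul hw0
  have h22 := (hv₂.mul hv₂).mul hw0
  -- time derivatives
  have e0 : dt2 η = fun t x y => (-1) * (dx2 v₁ t x y + dy2 v₂ t x y) := by
    funext t x y; linarith [heq1 t x y]
  have e1 : dt2 v₁ = fun t x y => ((-1) * (h t x y * dx2 η t x y) + ε * (h t x y * dx2 L t x y))
      + (-ε) * (dx2 (fun t x y => v₁ t x y * v₁ t x y * w t x y) t x y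
        + dy2 (fun t x y => v₁ t x y * v₂ t x y * w t x y) t x y) := by
    funext t x y; linarith [heq2x t x y]
  have e2 : dt2 v₂ = fun t x y => ((-1) * (h t x y * dy2 η t x y) + ε * (h t x y * dy2 L t x y))
      + (-ε) * (dx2 (fun t x y => v₂ t x y * v₁ t x y * w t x y) t x y
        + dy2 (fun t x y => v₂ t x y * v₂ t x y * w t x y) t x y) := by
    funext t x y; linarith [heq2y t x y]
  have ett : dt2 (dt2 η) t x y = -(dx2 (dt2 v₁) t x y + dy2 (dt2 v₂) t x y) := by
    rw [e0, dt2_cmul _ (hv₁.dx.add hv₂.dy), dt2_add hv₁.dx hv₂.dy, comm_tx hv₁, comm_ty hv₂]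
    ring
  have ex : dx2 (dt2 v₁) t x y = (-1) * dx2 (fun t x y => h t x y * dx2 η t x y) t x y
      + ε * dx2 (fun t x y => h t x y * dx2 L t x y) t x y
      + (-ε) * (dx2 (dx2 (fun t x y => v₁ t x y * v₁ t x y * w t x y)) t x y
        + dx2 (dy2 (fun t x y => v₁ t x y * v₂ t x y * w t x y)) t x y) := by
    rw [e1, dx2_add (((SM.const _).mul hA1).add ((SM.const _).mul hB1))
        ((SM.const _).mul (h11.dx.add h12.dy)),
      dx2_add ((SM.const _).mul hA1) ((SM.const _).mul hB1), dx2_cmul _ hA1, dx2_cmul _ hB1,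
      dx2_cmul _ (h11.dx.add h12.dy), dx2_add h11.dx h12.dy]
  have ey : dy2 (dt2 v₂) t x y = (-1) * dy2 (fun t x y => h t x y * dy2 η t x y) t x y
      + ε * dy2 (fun t x y => h t x y * dy2 L t x y) t x y
      + (-ε) * (dy2 (dx2 (fun t x y => v₂ t x y * v₁ t x y * w t x y)) t x y
        + dy2 (dy2 (fun t x y => v₂ t x y * v₂ t x y * w t x y)) t x y) := by
    rw [e2, dy2_add (((SM.const _).mul hA2).add ((SM.const _).mul hB2))
        ((SM.const _).mul (h21.dx.add h22.dy)),
      dy2_add ((SM.const _).mul hA2) ((SM.const _).mul hB2), dy2_cmul _ hA2, dy2_cmul _ hB2,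
      dy2_cmul _ (h21.dx.add h22.dy), dy2_add h21.dx h22.dy]
  have fx : ∀ a b : ℝ → ℝ → ℝ → ℝ, SM a → SM b →
      dx2 (fun t x y => a t x y * b t x y * w t x y) = fun t x y =>
        (dx2 a t x y * b t x y + a t x y * dx2 b t x y) * w t x y
          + a t x y * b t x y * dx2 w t x y := by
    intro a b ha hb
    funext t x y
    rw [dx2_mul (ha.mul hb) hw0, dx2_mul ha hb]
  have fy : ∀ a b : ℝ → ℝ → ℝ → ℝ, SM a → SM b →
      dy2 (fun t x y => a t x y * b t x y * w t x y) = fun t x y =>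
        (dy2 a t x y * b t x y + a t x y * dy2 b t x y) * w t x y
          + a t x y * b t x y * dy2 w t x y := by
    intro a b ha hb
    funext t x y
    rw [dy2_mul (ha.mul hb) hw0, dy2_mul ha hb]
  have gx : ∀ a b c d e : ℝ → ℝ → ℝ → ℝ, SM a → SM b → SM c → SM d → SM e → 
      dx2 (fun t x y => (c t x y * b t x y + a t x y * d t x y) * w t x y
          + a t x y * b t x y * e t x y) t x y =
        (dx2 c t x y * b t x y + c t x y * dx2 b t x y
          + (dx2 a t x y * d t x y + a t x y * dx2 d t x y)) * w t x y
        + (c t x y * b t x y + a t x y * d t x y) * dx2 w t x y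
        + ((dx2 a t x y * b t x y + a t x y * dx2 b t x y) * e t x y
          + a t x y * b t x y * dx2 e t x y) := by
    intro a b c d e ha hb hc hd he
    rw [dx2_add (((hc.mul hb).add (ha.mul hd)).mul hw0) ((ha.mul hb).mul he),
      dx2_mul ((hc.mul hb).add (ha.mul hd)) hw0, dx2_add (hc.mul hb) (ha.mul hd),
      dx2_mul hc hb, dx2_mul ha hd, dx2_mul (ha.mul hb) he, dx2_mul ha hb]
  have gy : ∀ a b c d e : ℝ → ℝ → ℝ → ℝ, SM a → SM b → SM c → SM d → SM e → 
      dy2 (fun t x y => (c t x y * b t x y + a t x y * d t x y) * w t x y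
          + a t x y * b t x y * e t x y) t x y =
        (dy2 c t x y * b t x y + c t x y * dy2 b t x y
          + (dy2 a t x y * d t x y + a t x y * dy2 d t x y)) * w t x y
        + (c t x y * b t x y + a t x y * d t x y) * dy2 w t x y
        + ((dy2 a t x y * b t x y + a t x y * dy2 b t x y) * e t x y
          + a t x y * b t x y * dy2 e t x y) := by
    intro a b c d e ha hb hc hd he
    rw [dy2_add (((hc.mul hb).add (ha.mul hd)).mul hw0) ((ha.mul hb).mul he),
      dy2_mul ((hc.mul hb).add (ha.mul hd)) hw0, dy2_add (hc.mul hb) (ha.mul hd),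
      dy2_mul hc hb, dy2_mul ha hd, dy2_mul (ha.mul hb) he, dy2_mul ha hb]
  rw [ett, ex, ey, e0, fx _ _ hv₁ hv₁, fy _ _ hv₁ hv₂, fx _ _ hv₂ hv₁, fy _ _ hv₂ hv₂,
    gx _ _ _ _ _ hv₁ hv₁ hv₁.dx hv₁.dx hw0.dx, gx _ _ _ _ _ hv₁ hv₂ hv₁.dy hv₂.dy hw0.dy,
    gy _ _ _ _ _ hv₂ hv₁ hv₂.dx hv₁.dx hw0.dx, gy _ _ _ _ _ hv₂ hv₂ hv₂.dy hv₂.dy hw0.dy,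
    dx2_cmul _ (hv₁.dx.add hv₂.dy), dy2_cmul _ (hv₁.dx.add hv₂.dy),
    dx2_add hv₁.dx hv₂.dy, dy2_add hv₁.dx hv₂.dy,
    dx2_add (hv₁.mul hw0.dx) (hv₂.mul hw0.dy), dy2_add (hv₁.mul hw0.dx) (hv₂.mul hw0.dy),
    dx2_mul hv₁ hw0.dx, dx2_mul hv₂ hw0.dy, dy2_mul hv₁ hw0.dx, dy2_mul hv₂ hw0.dy,
    dx2_mul hv₁ hw0, dx2_mul hv₂ hw0, dy2_mul hv₁ hw0, dy2_mul hv₂ hw0,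
    comm_xy hw0, comm_xy hv₁, comm_xy hv₂]
  ring
end

section
/- Let ε > 0 and T > 0, and let η, u : ℝ × ℝ → ℝ (time × space) be C^∞ functions satisfying ∂_t η + ∂_x u + ε ∂_x(ηu) − ε ∂_x³u = 0 and ∂_t u + ∂_x η + ε u ∂_x u = 0 for all (t,x). Suppose there is a compact set K ⊂ ℝ such that for every t ∈ [0,T] the functions η(t,·) and u(t,·) vanish outside K. Then for every t ∈ (0,T), the function t ↦ (1/2)∫_ℝ ( η² + u² + (∂_xη)² + (1+ε)(∂_xu)² + ε(∂_x²u)² ) dx is differentiable at t with derivative equal to −ε ∫_ℝ [ (1/2)(∂_xu)η² + (3/2)(∂_xu)(∂_xη)² + η(∂_xη)(∂_x²u) + ((1+ε)/2)(∂_xu)³ + (5ε/2)(∂_xu)(∂_x²u)² ] dx. -/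
open MeasureTheory

namespace EnergyAux

/-- Joint smoothness. -/
def Sm (f : ℝ → ℝ → ℝ) : Prop := ContDiff ℝ (⊤ : ℕ∞) fun p : ℝ × ℝ => f p.1 p.2

lemma Sm.diff {f} (h : Sm f) : Differentiable ℝ fun p : ℝ × ℝ => f p.1 p.2 :=
  ContDiff.differentiable h (by simp)

lemma hasx {f} (h : Sm f) (t x : ℝ) :
    HasDerivAt (fun y => f t y) (fderiv ℝ (fun p : ℝ × ℝ => f p.1 p.2) (t, x) (0, 1)) x := by
  have h1 : HasFDerivAt (fun p : ℝ × ℝ => f p.1 p.2) _ (t, x) := (h.diff (t, x)).hasFDerivAt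
  have h2 : HasDerivAt (fun y : ℝ => (t, y)) ((0 : ℝ), (1 : ℝ)) x :=
    (hasDerivAt_const x t).prodMk (hasDerivAt_id x)
  exact h1.comp_hasDerivAt x h2

lemma hast {f} (h : Sm f) (t x : ℝ) :
    HasDerivAt (fun s => f s x) (fderiv ℝ (fun p : ℝ × ℝ => f p.1 p.2) (t, x) (1, 0)) t := by
  have h1 : HasFDerivAt (fun p : ℝ × ℝ => f p.1 p.2) _ (t, x) := (h.diff (t, x)).hasFDerivAt
  have h2 : HasDerivAt (fun s : ℝ => (s, x)) ((1 : ℝ), (0 : ℝ)) t :=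
    (hasDerivAt_id t).prodMk (hasDerivAt_const t x)
  exact h1.comp_hasDerivAt t h2

lemma dx_eq {f} (h : Sm f) (t x : ℝ) :
    dx1 f t x = fderiv ℝ (fun p : ℝ × ℝ => f p.1 p.2) (t, x) (0, 1) := (hasx h t x).deriv

lemma dt_eq {f} (h : Sm f) (t x : ℝ) :
    dt1 f t x = fderiv ℝ (fun p : ℝ × ℝ => f p.1 p.2) (t, x) (1, 0) := (hast h t x).deriv

lemma Sm.hx {f} (h : Sm f) (t x : ℝ) : HasDerivAt (fun y => f t y) (dx1 f t x) x := by
  rw [dx_eq h]; exact hasx h t x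

lemma Sm.ht {f} (h : Sm f) (t x : ℝ) : HasDerivAt (fun s => f s x) (dt1 f t x) t := by
  rw [dt_eq h]; exact hast h t x

lemma Sm.dx {f} (h : Sm f) : Sm (dx1 f) := by
  have : (fun p : ℝ × ℝ => dx1 f p.1 p.2) =
      fun p => fderiv ℝ (fun p : ℝ × ℝ => f p.1 p.2) p (0, 1) := by
    ext p; exact dx_eq h p.1 p.2
  unfold Sm
  rw [this]
  exact (ContDiff.fderiv_right h (m := (⊤ : ℕ∞)) (by simp)).clm_apply contDiff_const

lemma Sm.dt {f} (h : Sm f) : Sm (dt1 f) := by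
  have : (fun p : ℝ × ℝ => dt1 f p.1 p.2) =
      fun p => fderiv ℝ (fun p : ℝ × ℝ => f p.1 p.2) p (1, 0) := by
    ext p; exact dt_eq h p.1 p.2
  unfold Sm
  rw [this]
  exact (ContDiff.fderiv_right h (m := (⊤ : ℕ∞)) (by simp)).clm_apply contDiff_const

lemma comm {f} (h : Sm f) : dt1 (dx1 f) = dx1 (dt1 f) := by
  ext t x
  have e1 : (fun p : ℝ × ℝ => dx1 f p.1 p.2) =
      fun p => fderiv ℝ (fun p : ℝ × ℝ => f p.1 p.2) p (0, 1) := by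
    ext p; exact dx_eq h p.1 p.2
  have e2 : (fun p : ℝ × ℝ => dt1 f p.1 p.2) =
      fun p => fderiv ℝ (fun p : ℝ × ℝ => f p.1 p.2) p (1, 0) := by
    ext p; exact dt_eq h p.1 p.2
  rw [dt_eq h.dx, dx_eq h.dt, e1, e2]
  have hd : DifferentiableAt ℝ (fderiv ℝ (fun p : ℝ × ℝ => f p.1 p.2)) (t, x) :=
    (ContDiff.fderiv_right h (m := (⊤ : ℕ∞)) (by simp)).differentiable (by simp) _
  have hs : IsSymmSndFDerivAt ℝ (fun p : ℝ × ℝ => f p.1 p.2) (t, x) :=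
    (ContDiff.contDiffAt h).isSymmSndFDerivAt (by
      simp only [minSmoothness_of_isRCLikeNormedField]; exact WithTop.coe_le_coe.2 (le_top (a := (2 : ℕ∞))))
  rw [fderiv_clm_apply hd (by fun_prop), fderiv_clm_apply hd (by fun_prop)]
  simpa using hs (1, 0) (0, 1)

lemma van {f : ℝ → ℝ → ℝ} {K : Set ℝ} (hK : IsCompact K) {t : ℝ} (h : ∀ x, x ∉ K → f t x = 0) :
    ∀ x, x ∉ K → dx1 f t x = 0 := by
  intro x hx
  have : (fun y => f t y) =ᶠ[nhds x] fun _ => 0 := by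
    filter_upwards [hK.isClosed.isOpen_compl.mem_nhds hx] with y hy using h y hy
  unfold dx1
  rw [this.deriv_eq]; simp

lemma Sm.contx {f} (h : Sm f) (t : ℝ) : Continuous (f t) :=
  continuous_iff_continuousAt.2 fun x => (h.hx t x).continuousAt

lemma integ {f : ℝ → ℝ} (h : Continuous f) {K : Set ℝ} (hK : IsCompact K)
    (h0 : ∀ x, x ∉ K → f x = 0) : Integrable f :=
  h.integrable_of_hasCompactSupport (HasCompactSupport.intro hK h0)

lemma int_dx {f} (h : Sm f) {K : Set ℝ} (hK : IsCompact K) {t : ℝ}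
    (h0 : ∀ x, x ∉ K → f t x = 0) : ∫ x, dx1 f t x = 0 :=
  integral_eq_zero_of_hasDerivAt_of_integrable (fun x => h.hx t x)
    (integ (h.dx.contx t) hK (van hK h0)) (integ (h.contx t) hK h0)

lemma diff_int {f} (h : Sm f) {K : Set ℝ} (hK : IsCompact K) {T t : ℝ} (ht : t ∈ Set.Ioo 0 T)
    (h0 : ∀ s ∈ Set.Icc 0 T, ∀ x, x ∉ K → f s x = 0) :
    (∀ x, x ∉ K → dt1 f t x = 0) ∧
    HasDerivAt (fun s => ∫ x, f s x) (∫ x, dt1 f t x) t := by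
  have hz : ∀ s ∈ Set.Ioo 0 T, ∀ x, x ∉ K → dt1 f s x = 0 := by
    intro s hs x hx
    have : (fun r => f r x) =ᶠ[nhds s] fun _ => 0 := by
      filter_upwards [Ioo_mem_nhds hs.1 hs.2] with r hr using h0 r ⟨hr.1.le, hr.2.le⟩ x hx
    unfold dt1
    rw [this.deriv_eq]; simp
  refine ⟨hz t ht, ?_⟩
  obtain ⟨C, hC⟩ := ((isCompact_Icc (a := (0 : ℝ)) (b := T)).prod hK).exists_bound_of_continuousOn
    (f := fun p : ℝ × ℝ => dt1 f p.1 p.2) (ContDiff.continuous h.dt).continuousOn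
  refine (hasDerivAt_integral_of_dominated_loc_of_deriv_le (μ := volume) (F := fun s x => f s x)
    (F' := fun s x => dt1 f s x)
    (bound := K.indicator fun _ => C) (Ioo_mem_nhds ht.1 ht.2)
    (Filter.Eventually.of_forall fun s => (h.contx s).aestronglyMeasurable)
    (integ (h.contx t) hK (h0 t ⟨ht.1.le, ht.2.le⟩))
    (h.dt.contx t).aestronglyMeasurable
    (Filter.Eventually.of_forall fun x s hs => ?_) ?_
    (Filter.Eventually.of_forall fun x s hs => h.ht s x)).2
  · by_cases hx : x ∈ K
    · simpa [hx] using hC (s, x) ⟨⟨hs.1.le, hs.2.le⟩, hx⟩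
    · simp [hx, hz s hs x hx]
  · rw [integrable_indicator_iff hK.measurableSet]
    exact integrableOn_const hK.measure_lt_top.ne

end EnergyAux

/-- The energy identity (3.2) of the paper for the 1D Boussinesq system with
`b = c = d = 0`, `a = -1`: the derivative of
`(1/2)∫ (η² + u² + η_x² + (1+ε)u_x² + ε u_{xx}²) dx` equals
`-ε ∫ ((1/2)u_x η² + (3/2)u_x η_x² + η η_x u_{xx} + ((1+ε)/2)u_x³ + (5ε/2)u_x u_{xx}²) dx`. -/
theorem energy_identity (ε T : ℝ) (hε : 0 < ε) (hT : 0 < T)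
    (η u : ℝ → ℝ → ℝ)
    (hη : ContDiff ℝ (⊤ : ℕ∞) fun p : ℝ × ℝ => η p.1 p.2)
    (hu : ContDiff ℝ (⊤ : ℕ∞) fun p : ℝ × ℝ => u p.1 p.2)
    (heq1 : ∀ t x, dt1 η t x + dx1 u t x + ε * dx1 (fun t x => η t x * u t x) t x
      - ε * dx1 (dx1 (dx1 u)) t x = 0)
    (heq2 : ∀ t x, dt1 u t x + dx1 η t x + ε * u t x * dx1 u t x = 0)
    (K : Set ℝ) (hK : IsCompact K)
    (hsupp : ∀ t ∈ Set.Icc (0 : ℝ) T, ∀ x, x ∉ K → η t x = 0 ∧ u t x = 0) :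
    ∀ t ∈ Set.Ioo (0 : ℝ) T,
      HasDerivAt (fun τ => (1 / 2) *
          ∫ x, (η τ x ^ 2 + u τ x ^ 2 + dx1 η τ x ^ 2
            + (1 + ε) * dx1 u τ x ^ 2 + ε * dx1 (dx1 u) τ x ^ 2))
        (-ε * ∫ x, ((1 / 2) * dx1 u t x * η t x ^ 2
          + (3 / 2) * dx1 u t x * dx1 η t x ^ 2
          + η t x * dx1 η t x * dx1 (dx1 u) t x
          + ((1 + ε) / 2) * dx1 u t x ^ 3
          + (5 * ε / 2) * dx1 u t x * dx1 (dx1 u) t x ^ 2)) t := by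
  intro t ht
  have hη' : EnergyAux.Sm η := hη
  have hu' : EnergyAux.Sm u := hu
  have htI : t ∈ Set.Icc 0 T := ⟨ht.1.le, ht.2.le⟩
  have smE1 := hη'.dx
  have smE2 := smE1.dx
  have smU1 := hu'.dx
  have smU2 := smU1.dx
  have smU3 := smU2.dx
  -- the equations solved for the time derivatives
  have eU : dt1 u = fun t x => -dx1 η t x - ε * (u t x * dx1 u t x) := by
    ext t x; linarith [heq2 t x]
  have eE : dt1 η = fun t x => -dx1 u t x - ε * (dx1 η t x * u t x + η t x * dx1 u t x)
      + ε * dx1 (dx1 (dx1 u)) t x := by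
    ext t x
    have : dx1 (fun t x => η t x * u t x) t x = dx1 η t x * u t x + η t x * dx1 u t x :=
      ((hη'.hx t x).mul (hu'.hx t x)).deriv
    have h := heq1 t x
    rw [this] at h; linarith
  have eE1 : dt1 (dx1 η) = fun t x => -dx1 (dx1 u) t x
      - ε * (dx1 (dx1 η) t x * u t x + 2 * (dx1 η t x * dx1 u t x) + η t x * dx1 (dx1 u) t x)
      + ε * dx1 (dx1 (dx1 (dx1 u))) t x := by
    rw [EnergyAux.comm hη', eE]
    ext t x
    have := ((smU1.hx t x).neg.sub ((((smE1.hx t x).mul (hu'.hx t x)).add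
      ((hη'.hx t x).mul (smU1.hx t x))).const_mul ε)).add ((smU3.hx t x).const_mul ε)
    refine (HasDerivAt.deriv this).trans ?_
    ring
  have eU1 : dt1 (dx1 u) = fun t x => -dx1 (dx1 η) t x
      - ε * (dx1 u t x * dx1 u t x + u t x * dx1 (dx1 u) t x) := by
    rw [EnergyAux.comm hu', eU]
    ext t x
    have := (smE1.hx t x).neg.sub (((hu'.hx t x).mul (smU1.hx t x)).const_mul ε)
    exact HasDerivAt.deriv this
  have eU2 : dt1 (dx1 (dx1 u)) = fun t x => -dx1 (dx1 (dx1 η)) t x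
      - ε * (3 * (dx1 u t x * dx1 (dx1 u) t x) + u t x * dx1 (dx1 (dx1 u)) t x) := by
    rw [EnergyAux.comm smU1, eU1]
    ext t x
    have := (smE2.hx t x).neg.sub ((((smU1.hx t x).mul (smU1.hx t x)).add
      ((hu'.hx t x).mul (smU2.hx t x))).const_mul ε)
    refine (HasDerivAt.deriv this).trans ?_
    ring
  -- vanishing
  have vE : ∀ s ∈ Set.Icc 0 T, ∀ x, x ∉ K → η s x = 0 := fun s hs x hx => (hsupp s hs x hx).1
  have vU : ∀ s ∈ Set.Icc 0 T, ∀ x, x ∉ K → u s x = 0 := fun s hs x hx => (hsupp s hs x hx).2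
  have vE1 : ∀ s ∈ Set.Icc 0 T, ∀ x, x ∉ K → dx1 η s x = 0 :=
    fun s hs => EnergyAux.van hK (vE s hs)
  have vE2 : ∀ s ∈ Set.Icc 0 T, ∀ x, x ∉ K → dx1 (dx1 η) s x = 0 :=
    fun s hs => EnergyAux.van hK (vE1 s hs)
  have vU1 : ∀ s ∈ Set.Icc 0 T, ∀ x, x ∉ K → dx1 u s x = 0 :=
    fun s hs => EnergyAux.van hK (vU s hs)
  have vU2 : ∀ s ∈ Set.Icc 0 T, ∀ x, x ∉ K → dx1 (dx1 u) s x = 0 :=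
    fun s hs => EnergyAux.van hK (vU1 s hs)
  -- energy density
  let G : ℝ → ℝ → ℝ := fun τ x => η τ x ^ 2 + u τ x ^ 2 + dx1 η τ x ^ 2
            + (1 + ε) * dx1 u τ x ^ 2 + ε * dx1 (dx1 u) τ x ^ 2
  have smG : EnergyAux.Sm G := by
    unfold EnergyAux.Sm at *
    exact ((((hη'.pow 2).add (hu'.pow 2)).add (smE1.pow 2)).add
      (contDiff_const.mul (smU1.pow 2))).add (contDiff_const.mul (smU2.pow 2))
  have vG : ∀ s ∈ Set.Icc 0 T, ∀ x, x ∉ K → G s x = 0 := by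
    intro s hs x hx
    simp [G, vE s hs x hx, vU s hs x hx, vE1 s hs x hx, vU1 s hs x hx, vU2 s hs x hx]
  obtain ⟨vGt, hG⟩ := EnergyAux.diff_int smG hK ht vG
  have eG : ∀ x, dt1 G t x = 2 * (η t x * dt1 η t x + u t x * dt1 u t x
      + dx1 η t x * dt1 (dx1 η) t x + (1 + ε) * (dx1 u t x * dt1 (dx1 u) t x)
      + ε * (dx1 (dx1 u) t x * dt1 (dx1 (dx1 u)) t x)) := by
    intro x
    have := (((((hη'.ht t x).pow 2).add ((hu'.ht t x).pow 2)).add ((smE1.ht t x).pow 2)).add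
      (((smU1.ht t x).pow 2).const_mul (1 + ε))).add (((smU2.ht t x).pow 2).const_mul ε)
    refine (HasDerivAt.deriv this).trans ?_
    push_cast
    ring
  -- flux
  let F : ℝ → ℝ → ℝ := fun t x => -(η t x * u t x) - dx1 η t x * dx1 u t x
    + ε * (η t x * dx1 (dx1 u) t x - dx1 η t x * dx1 u t x)
    + ε * (dx1 η t x * dx1 (dx1 (dx1 u)) t x - dx1 (dx1 η) t x * dx1 (dx1 u) t x)
    - ε * ((1 / 2) * (η t x ^ 2 * u t x) + (1 / 2) * (dx1 η t x ^ 2 * u t x)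
      + (1 / 3) * u t x ^ 3 + ((1 + ε) / 2) * (u t x * dx1 u t x ^ 2)
      + (ε / 2) * (u t x * dx1 (dx1 u) t x ^ 2))
  have smF : EnergyAux.Sm F := by
    unfold EnergyAux.Sm at *
    exact (((((hη'.mul hu').neg.sub (smE1.mul smU1)).add
      (contDiff_const.mul ((hη'.mul smU2).sub (smE1.mul smU1)))).add
      (contDiff_const.mul ((smE1.mul smU3).sub (smE2.mul smU2)))).sub
      (contDiff_const.mul (((((contDiff_const.mul ((hη'.pow 2).mul hu')).add
        (contDiff_const.mul ((smE1.pow 2).mul hu'))).add (contDiff_const.mul (hu'.pow 3))).add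
        (contDiff_const.mul (hu'.mul (smU1.pow 2)))).add
        (contDiff_const.mul (hu'.mul (smU2.pow 2))))))
  have vF : ∀ x, x ∉ K → F t x = 0 := by
    intro x hx
    simp [F, vE t htI x hx, vU t htI x hx, vE1 t htI x hx, vU1 t htI x hx, vU2 t htI x hx]
  have hF0 := EnergyAux.int_dx smF hK vF
  let R : ℝ → ℝ → ℝ := fun t x => (1 / 2) * dx1 u t x * η t x ^ 2
          + (3 / 2) * dx1 u t x * dx1 η t x ^ 2
          + η t x * dx1 η t x * dx1 (dx1 u) t x
          + ((1 + ε) / 2) * dx1 u t x ^ 3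
          + (5 * ε / 2) * dx1 u t x * dx1 (dx1 u) t x ^ 2
  have eF : ∀ x, dx1 F t x = (1 / 2) * dt1 G t x + ε * R t x := by
    intro x
    have hE := hη'.hx t x
    have hU := hu'.hx t x
    have hE1 := smE1.hx t x
    have hE2 := smE2.hx t x
    have hU1 := smU1.hx t x
    have hU2 := smU2.hx t x
    have hU3 := smU3.hx t x
    have := (((((hE.mul hU).neg.sub (hE1.mul hU1)).add
      (((hE.mul hU2).sub (hE1.mul hU1)).const_mul ε)).add
      (((hE1.mul hU3).sub (hE2.mul hU2)).const_mul ε)).sub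
      ((((((((hE.pow 2).mul hU).const_mul (1 / 2)).add
        (((hE1.pow 2).mul hU).const_mul (1 / 2))).add ((hU.pow 3).const_mul (1 / 3))).add
        ((hU.mul (hU1.pow 2)).const_mul ((1 + ε) / 2))).add
        ((hU.mul (hU2.pow 2)).const_mul (ε / 2))).const_mul ε))
    refine (HasDerivAt.deriv this).trans ?_
    rw [eG, eE1, eU2, eU1, eE, eU]
    simp only [R, Pi.pow_apply, Pi.mul_apply]
    push_cast
    ring
  have cR : Continuous (R t) := by
    have c1 := hη'.contx t
    have c2 := hu'.contx t
    have c3 := smE1.contx t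
    have c4 := smU1.contx t
    have c5 := smU2.contx t
    simp only [R]
    fun_prop
  have iR : Integrable (R t) := EnergyAux.integ cR hK (by
    intro x hx
    simp [R, vE t htI x hx, vE1 t htI x hx, vU1 t htI x hx])
  have iG : Integrable (dt1 G t) := EnergyAux.integ (smG.dt.contx t) hK vGt
  have key : (1 / 2) * (∫ x, dt1 G t x) = -ε * ∫ x, R t x := by
    have h1 : ∫ x, ((1 / 2) * dt1 G t x + ε * R t x) = 0 := by
      rw [← hF0]; exact integral_congr_ae (Filter.Eventually.of_forall fun x => (eF x).symm)
    rw [integral_add (iG.const_mul _) (iR.const_mul _), integral_const_mul,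
      integral_const_mul] at h1
    linarith
  have := hG.const_mul (1 / 2)
  rw [key] at this
  exact this
end

section
/- Let ε > 0, H ∈ (0,1) and T > 0, and let η, v : ℝ × ℝ → ℝ (time × space) be C^∞ functions with 1 + ε·η(t,x) ≥ H for all (t,x), satisfying ∂_t η + ∂_x v = 0 and ∂_t v + (1+εη)∂_x η − ε(1+εη)∂_x³η + ε ∂_x( v²/(1+εη) ) = 0 for all (t,x). Suppose there is a compact set K ⊂ ℝ such that for every t ∈ [0,T] the functions η(t,·) and v(t,·) vanish outside K. Define E₀(t) = ∫_ℝ η² dx + ε ∫_ℝ (∂_xη)² dx + ∫_ℝ v²/(1+εη) dx. Then for every t ∈ (0,T), E₀ is differentiable at t and (1/2)·E₀'(t) = −(ε/2)∫_ℝ (∂_tη)·v²/(1+εη)² dx − ε ∫_ℝ ∂_x( v²/(1+εη) )·( v/(1+εη) ) dx. -/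
open MeasureTheory

theorem smooth_hasDerivAt_t {f : ℝ → ℝ → ℝ} (hf : ContDiff ℝ (⊤ : ℕ∞) fun p : ℝ × ℝ => f p.1 p.2)
    (t x : ℝ) : HasDerivAt (fun s => f s x)
      (fderiv ℝ (fun p : ℝ × ℝ => f p.1 p.2) (t, x) (1, 0)) t := by
  have h1 : HasFDerivAt (fun p : ℝ × ℝ => f p.1 p.2)
      (fderiv ℝ (fun p : ℝ × ℝ => f p.1 p.2) (t, x)) (t, x) :=
    ((hf.differentiable (by simp)) (t, x)).hasFDerivAt
  have h2 : HasDerivAt (fun s : ℝ => (s, x)) ((1 : ℝ), (0 : ℝ)) t :=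
    (hasDerivAt_id t).prodMk (hasDerivAt_const t x)
  exact HasFDerivAt.comp_hasDerivAt (f := fun s : ℝ => (s, x)) t h1 h2

theorem smooth_hasDerivAt_x {f : ℝ → ℝ → ℝ} (hf : ContDiff ℝ (⊤ : ℕ∞) fun p : ℝ × ℝ => f p.1 p.2)
    (t x : ℝ) : HasDerivAt (fun y => f t y)
      (fderiv ℝ (fun p : ℝ × ℝ => f p.1 p.2) (t, x) (0, 1)) x := by
  have h1 : HasFDerivAt (fun p : ℝ × ℝ => f p.1 p.2)
      (fderiv ℝ (fun p : ℝ × ℝ => f p.1 p.2) (t, x)) (t, x) :=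
    ((hf.differentiable (by simp)) (t, x)).hasFDerivAt
  have h2 : HasDerivAt (fun s : ℝ => (t, s)) ((0 : ℝ), (1 : ℝ)) x :=
    (hasDerivAt_const x t).prodMk (hasDerivAt_id x)
  exact HasFDerivAt.comp_hasDerivAt (f := fun s : ℝ => (t, s)) x h1 h2

theorem dt1_eq {f : ℝ → ℝ → ℝ} (hf : ContDiff ℝ (⊤ : ℕ∞) fun p : ℝ × ℝ => f p.1 p.2) (t x : ℝ) :
    dt1 f t x = fderiv ℝ (fun p : ℝ × ℝ => f p.1 p.2) (t, x) (1, 0) :=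
  (smooth_hasDerivAt_t hf t x).deriv

theorem dx1_eq {f : ℝ → ℝ → ℝ} (hf : ContDiff ℝ (⊤ : ℕ∞) fun p : ℝ × ℝ => f p.1 p.2) (t x : ℝ) :
    dx1 f t x = fderiv ℝ (fun p : ℝ × ℝ => f p.1 p.2) (t, x) (0, 1) :=
  (smooth_hasDerivAt_x hf t x).deriv

theorem hdt {f : ℝ → ℝ → ℝ} (hf : ContDiff ℝ (⊤ : ℕ∞) fun p : ℝ × ℝ => f p.1 p.2) (t x : ℝ) :
    HasDerivAt (fun s => f s x) (dt1 f t x) t := by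
  rw [dt1_eq hf]; exact smooth_hasDerivAt_t hf t x

theorem hdx {f : ℝ → ℝ → ℝ} (hf : ContDiff ℝ (⊤ : ℕ∞) fun p : ℝ × ℝ => f p.1 p.2) (t x : ℝ) :
    HasDerivAt (fun y => f t y) (dx1 f t x) x := by
  rw [dx1_eq hf]; exact smooth_hasDerivAt_x hf t x

theorem sdt {f : ℝ → ℝ → ℝ} (hf : ContDiff ℝ (⊤ : ℕ∞) fun p : ℝ × ℝ => f p.1 p.2) :
    ContDiff ℝ (⊤ : ℕ∞) fun p : ℝ × ℝ => dt1 f p.1 p.2 := by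
  have : (fun p : ℝ × ℝ => dt1 f p.1 p.2)
      = fun p => fderiv ℝ (fun p : ℝ × ℝ => f p.1 p.2) p (1, 0) := by
    funext p; exact dt1_eq hf p.1 p.2
  rw [this]
  exact (hf.fderiv_right (m := (⊤ : ℕ∞)) (by simp)).clm_apply contDiff_const

theorem sdx {f : ℝ → ℝ → ℝ} (hf : ContDiff ℝ (⊤ : ℕ∞) fun p : ℝ × ℝ => f p.1 p.2) :
    ContDiff ℝ (⊤ : ℕ∞) fun p : ℝ × ℝ => dx1 f p.1 p.2 := by
  have : (fun p : ℝ × ℝ => dx1 f p.1 p.2)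
      = fun p => fderiv ℝ (fun p : ℝ × ℝ => f p.1 p.2) p (0, 1) := by
    funext p; exact dx1_eq hf p.1 p.2
  rw [this]
  exact (hf.fderiv_right (m := (⊤ : ℕ∞)) (by simp)).clm_apply contDiff_const

theorem dt_dx_comm {f : ℝ → ℝ → ℝ} (hf : ContDiff ℝ (⊤ : ℕ∞) fun p : ℝ × ℝ => f p.1 p.2)
    (t x : ℝ) : dt1 (dx1 f) t x = dx1 (dt1 f) t x := by
  have hsym : IsSymmSndFDerivAt ℝ (fun p : ℝ × ℝ => f p.1 p.2) (t, x) :=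
    hf.contDiffAt.isSymmSndFDerivAt (by simpa using WithTop.coe_le_coe.2 (le_top : (2 : ℕ∞) ≤ ⊤))
  have hd : DifferentiableAt ℝ (fderiv ℝ (fun p : ℝ × ℝ => f p.1 p.2)) (t, x) :=
    ((hf.fderiv_right (m := (⊤ : ℕ∞)) (by simp)).differentiable (by simp)) _
  have e1 : (fun p : ℝ × ℝ => dx1 f p.1 p.2)
      = fun p => fderiv ℝ (fun p : ℝ × ℝ => f p.1 p.2) p (0, 1) := by
    funext p; exact dx1_eq hf p.1 p.2
  have e2 : (fun p : ℝ × ℝ => dt1 f p.1 p.2)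
      = fun p => fderiv ℝ (fun p : ℝ × ℝ => f p.1 p.2) p (1, 0) := by
    funext p; exact dt1_eq hf p.1 p.2
  rw [dt1_eq (sdx hf), dx1_eq (sdt hf), e1, e2, fderiv_clm_apply hd (by fun_prop),
    fderiv_clm_apply hd (by fun_prop)]
  simpa using hsym.eq (1, 0) (0, 1)

theorem slice_cont {f : ℝ → ℝ → ℝ} (hf : ContDiff ℝ (⊤ : ℕ∞) fun p : ℝ × ℝ => f p.1 p.2) (t : ℝ) :
    Continuous (f t) :=
  hf.continuous.comp (Continuous.prodMk continuous_const continuous_id)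

theorem slice_int {f : ℝ → ℝ → ℝ} (hf : ContDiff ℝ (⊤ : ℕ∞) fun p : ℝ × ℝ => f p.1 p.2) {t : ℝ}
    {K : Set ℝ} (hK : IsCompact K) (h0 : ∀ x, x ∉ K → f t x = 0) : Integrable (f t) :=
  (slice_cont hf t).integrable_of_hasCompactSupport (HasCompactSupport.intro hK h0)

theorem dx_zero {f : ℝ → ℝ → ℝ} {t : ℝ} {K : Set ℝ} (hK : IsCompact K)
    (h0 : ∀ x, x ∉ K → f t x = 0) : ∀ x, x ∉ K → dx1 f t x = 0 := by
  intro x hx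
  have : (fun y => f t y) =ᶠ[nhds x] fun _ => 0 := by
    filter_upwards [hK.isClosed.isOpen_compl.mem_nhds hx] with y hy using h0 y hy
  simp [dx1, this.deriv_eq]

theorem dt_zero {f : ℝ → ℝ → ℝ} {T : ℝ} {K : Set ℝ}
    (h0 : ∀ t ∈ Set.Ioo 0 T, ∀ x, x ∉ K → f t x = 0) :
    ∀ t ∈ Set.Ioo 0 T, ∀ x, x ∉ K → dt1 f t x = 0 := by
  intro t ht x hx
  have : (fun s => f s x) =ᶠ[nhds t] fun _ => 0 := by
    filter_upwards [isOpen_Ioo.mem_nhds ht] with s hs using h0 s hs x hx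
  simp [dt1, this.deriv_eq]

theorem int_dx {f : ℝ → ℝ → ℝ} (hf : ContDiff ℝ (⊤ : ℕ∞) fun p : ℝ × ℝ => f p.1 p.2) {t : ℝ}
    {K : Set ℝ} (hK : IsCompact K) (h0 : ∀ x, x ∉ K → f t x = 0) : ∫ x, dx1 f t x = 0 :=
  integral_eq_zero_of_hasDerivAt_of_integrable (hdx hf t)
    (slice_int (sdx hf) hK (dx_zero hK h0)) (slice_int hf hK h0)

theorem int_dt {f : ℝ → ℝ → ℝ} (hf : ContDiff ℝ (⊤ : ℕ∞) fun p : ℝ × ℝ => f p.1 p.2) {T : ℝ}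
    {K : Set ℝ} (hK : IsCompact K) (h0 : ∀ t ∈ Set.Ioo 0 T, ∀ x, x ∉ K → f t x = 0)
    {t : ℝ} (ht : t ∈ Set.Ioo 0 T) :
    HasDerivAt (fun τ => ∫ x, f τ x) (∫ x, dt1 f t x) t := by
  obtain ⟨C, hC⟩ := (isCompact_Icc (a := (0 : ℝ)) (b := T)).prod hK |>.exists_bound_of_continuousOn
    (sdt hf).continuous.continuousOn
  refine (hasDerivAt_integral_of_dominated_loc_of_deriv_le (s := Set.Ioo 0 T)
    (bound := K.indicator fun _ => C) (isOpen_Ioo.mem_nhds ht) ?_ ?_ ?_ ?_ ?_ ?_).2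
  · exact Filter.Eventually.of_forall fun s => (slice_cont hf s).aestronglyMeasurable
  · exact slice_int hf hK (h0 t ht)
  · exact (slice_cont (sdt hf) t).aestronglyMeasurable
  · refine Filter.Eventually.of_forall fun x s hs => ?_
    by_cases hx : x ∈ K
    · simpa [hx] using hC (s, x) ⟨Set.Ioo_subset_Icc_self hs, hx⟩
    · simp [hx, dt_zero h0 s hs x hx]
  · rw [integrable_indicator_iff hK.measurableSet]
    exact integrableOn_const hK.measure_lt_top.ne
  · exact Filter.Eventually.of_forall fun x s _ => hdt hf s x

/-- The L²-level energy identity (Step 3.1 of the proof of Theorem 4.6) for the reduced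
system: with `E₀(t) = ∫ η² + ε ∫ η_x² + ∫ v²/(1+εη)`, one has
`(1/2)E₀'(t) = -(ε/2)∫ η_t v²/(1+εη)² - ε ∫ (v²/(1+εη))_x ⬝ v/(1+εη)`. -/
theorem energy_identity_reduced (ε H T : ℝ) (hε : 0 < ε) (hH : H ∈ Set.Ioo (0 : ℝ) 1)
    (hT : 0 < T) (η v : ℝ → ℝ → ℝ)
    (hη : ContDiff ℝ (⊤ : ℕ∞) fun p : ℝ × ℝ => η p.1 p.2)
    (hv : ContDiff ℝ (⊤ : ℕ∞) fun p : ℝ × ℝ => v p.1 p.2)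
    (hpos : ∀ t x, H ≤ 1 + ε * η t x)
    (heq1 : ∀ t x, dt1 η t x + dx1 v t x = 0)
    (heq2 : ∀ t x, dt1 v t x + (1 + ε * η t x) * dx1 η t x
      - ε * (1 + ε * η t x) * dx1 (dx1 (dx1 η)) t x
      + ε * dx1 (fun t x => v t x ^ 2 / (1 + ε * η t x)) t x = 0)
    (K : Set ℝ) (hK : IsCompact K)
    (hsupp : ∀ t ∈ Set.Icc (0 : ℝ) T, ∀ x, x ∉ K → η t x = 0 ∧ v t x = 0) :
    ∀ t ∈ Set.Ioo (0 : ℝ) T,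
      HasDerivAt (fun τ => (∫ x, η τ x ^ 2) + ε * (∫ x, dx1 η τ x ^ 2)
          + ∫ x, v τ x ^ 2 / (1 + ε * η τ x))
        (2 * (-(ε / 2) * (∫ x, dt1 η t x * v t x ^ 2 / (1 + ε * η t x) ^ 2)
          - ε * ∫ x, dx1 (fun t x => v t x ^ 2 / (1 + ε * η t x)) t x *
              (v t x / (1 + ε * η t x)))) t := by
  intro t ht
  have hh : ∀ t x, 1 + ε * η t x ≠ 0 := fun t x => (lt_of_lt_of_le hH.1 (hpos t x)).ne'
  have hη0 : ∀ t ∈ Set.Ioo (0 : ℝ) T, ∀ x, x ∉ K → η t x = 0 := fun t ht x hx =>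
    (hsupp t (Set.Ioo_subset_Icc_self ht) x hx).1
  have hv0 : ∀ t ∈ Set.Ioo (0 : ℝ) T, ∀ x, x ∉ K → v t x = 0 := fun t ht x hx =>
    (hsupp t (Set.Ioo_subset_Icc_self ht) x hx).2
  have hηx0 : ∀ t ∈ Set.Ioo (0 : ℝ) T, ∀ x, x ∉ K → dx1 η t x = 0 := fun t ht =>
    dx_zero hK (hη0 t ht)
  have hden : ContDiff ℝ (⊤ : ℕ∞) fun p : ℝ × ℝ => 1 + ε * η p.1 p.2 :=
    contDiff_const.add (contDiff_const.mul hη)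
  have s1 : ContDiff ℝ (⊤ : ℕ∞) fun p : ℝ × ℝ => (fun t x => η t x ^ 2) p.1 p.2 := hη.pow 2
  have s2 : ContDiff ℝ (⊤ : ℕ∞) fun p : ℝ × ℝ => (fun t x => dx1 η t x ^ 2) p.1 p.2 :=
    (sdx hη).pow 2
  have s3 : ContDiff ℝ (⊤ : ℕ∞) fun p : ℝ × ℝ =>
      (fun t x => v t x ^ 2 / (1 + ε * η t x)) p.1 p.2 :=
    (hv.pow 2).div hden fun p => hh p.1 p.2
  have sA : ContDiff ℝ (⊤ : ℕ∞) fun p : ℝ × ℝ =>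
      (fun t x => dt1 η t x * v t x ^ 2 / (1 + ε * η t x) ^ 2) p.1 p.2 :=
    ((sdt hη).mul (hv.pow 2)).div (hden.pow 2) fun p => pow_ne_zero 2 (hh p.1 p.2)
  have sB : ContDiff ℝ (⊤ : ℕ∞) fun p : ℝ × ℝ =>
      (fun t x => dx1 (fun t x => v t x ^ 2 / (1 + ε * η t x)) t x *
              (v t x / (1 + ε * η t x))) p.1 p.2 :=
    (sdx s3).mul (hv.div hden fun p => hh p.1 p.2)
  have sF : ContDiff ℝ (⊤ : ℕ∞) fun p : ℝ × ℝ =>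
      (fun t x => -2 * (η t x * v t x) + 2 * ε * (v t x * dx1 (dx1 η) t x
        - dx1 η t x * dx1 v t x)) p.1 p.2 :=
    (contDiff_const.mul (hη.mul hv)).add (contDiff_const.mul
      ((hv.mul (sdx (sdx hη))).sub ((sdx hη).mul (sdx hv))))
  have z1 : ∀ t ∈ Set.Ioo (0 : ℝ) T, ∀ x, x ∉ K → (fun t x => η t x ^ 2) t x = 0 :=
    fun t ht x hx => by simp [hη0 t ht x hx]
  have z2 : ∀ t ∈ Set.Ioo (0 : ℝ) T, ∀ x, x ∉ K → (fun t x => dx1 η t x ^ 2) t x = 0 :=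
    fun t ht x hx => by simp [hηx0 t ht x hx]
  have z3 : ∀ t ∈ Set.Ioo (0 : ℝ) T, ∀ x, x ∉ K →
      (fun t x => v t x ^ 2 / (1 + ε * η t x)) t x = 0 :=
    fun t ht x hx => by simp [hv0 t ht x hx]
  have D := ((int_dt s1 hK z1 ht).add ((int_dt s2 hK z2 ht).const_mul ε)).add (int_dt s3 hK z3 ht)
  refine D.congr_deriv ?_
  have i1 := slice_int (sdt s1) hK (dt_zero z1 t ht)
  have i2 := slice_int (sdt s2) hK (dt_zero z2 t ht)
  have i3 := slice_int (sdt s3) hK (dt_zero z3 t ht)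
  have iA := slice_int (f := (fun t x => dt1 η t x * v t x ^ 2 / (1 + ε * η t x) ^ 2)) (t := t) sA hK fun x hx => by simp [hv0 t ht x hx]
  have iB := slice_int (f := (fun t x => dx1 (fun t x => v t x ^ 2 / (1 + ε * η t x)) t x *
              (v t x / (1 + ε * η t x)))) (t := t) sB hK fun x hx => by simp [hv0 t ht x hx]
  have hF := int_dx (f := (fun t x => -2 * (η t x * v t x) + 2 * ε * (v t x * dx1 (dx1 η) t x
        - dx1 η t x * dx1 v t x))) (t := t) sF hK fun x hx => by simp [hv0 t ht x hx, hηx0 t ht x hx]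
  have key : ∀ x, dx1 (fun t x => -2 * (η t x * v t x) + 2 * ε * (v t x * dx1 (dx1 η) t x
        - dx1 η t x * dx1 v t x)) t x
      = dt1 (fun t x => η t x ^ 2) t x + ε * dt1 (fun t x => dx1 η t x ^ 2) t x
        + dt1 (fun t x => v t x ^ 2 / (1 + ε * η t x)) t x
        + ε * (dt1 η t x * v t x ^ 2 / (1 + ε * η t x) ^ 2)
        + 2 * ε * (dx1 (fun t x => v t x ^ 2 / (1 + ε * η t x)) t x *
              (v t x / (1 + ε * η t x))) := by
    intro x
    have e1 : dt1 (fun t x => η t x ^ 2) t x = 2 * η t x * dt1 η t x := by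
      have := ((hdt hη t x).pow 2).deriv
      refine Eq.trans this ?_
      simp
    have e2 : dt1 (fun t x => dx1 η t x ^ 2) t x = 2 * dx1 η t x * dt1 (dx1 η) t x := by
      have := ((hdt (sdx hη) t x).pow 2).deriv
      refine Eq.trans this ?_
      simp
    have e3 : dt1 (fun t x => v t x ^ 2 / (1 + ε * η t x)) t x
        = (2 * v t x * dt1 v t x * (1 + ε * η t x) - v t x ^ 2 * (ε * dt1 η t x))
          / (1 + ε * η t x) ^ 2 := by
      have := (((hdt hv t x).pow 2).div (((hdt hη t x).const_mul ε).const_add 1) (hh t x)).deriv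
      refine Eq.trans this ?_
      simp
    have eF : dx1 (fun t x => -2 * (η t x * v t x) + 2 * ε * (v t x * dx1 (dx1 η) t x
        - dx1 η t x * dx1 v t x)) t x
        = -2 * (dx1 η t x * v t x + η t x * dx1 v t x)
          + 2 * ε * ((dx1 v t x * dx1 (dx1 η) t x + v t x * dx1 (dx1 (dx1 η)) t x)
            - (dx1 (dx1 η) t x * dx1 v t x + dx1 η t x * dx1 (dx1 v) t x)) :=
      ((((hdx hη t x).mul (hdx hv t x)).const_mul (-2)).add
        ((((hdx hv t x).mul (hdx (sdx (sdx hη)) t x)).sub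
          ((hdx (sdx hη) t x).mul (hdx (sdx hv) t x))).const_mul (2 * ε))).deriv
    have e4 : dt1 (dx1 η) t x = - dx1 (dx1 v) t x := by
      rw [dt_dx_comm hη]
      have : dt1 η = fun t x => - dx1 v t x := by
        funext t x; linarith [heq1 t x]
      rw [this]
      exact (hdx (sdx hv) t x).neg.deriv
    have e5 : dt1 η t x = - dx1 v t x := by linarith [heq1 t x]
    have e6 := heq2 t x
    rw [eF, e1, e2, e3, e4, e5]
    generalize dx1 (fun t x => v t x ^ 2 / (1 + ε * η t x)) t x = Q at *
    have e7 : dt1 v t x = - ((1 + ε * η t x) * dx1 η t x)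
      + ε * (1 + ε * η t x) * dx1 (dx1 (dx1 η)) t x - ε * Q := by linarith
    rw [e7]
    have := hh t x
    generalize 1 + ε * η t x = h at *
    field_simp
    ring
  simp_rw [key] at hF
  rw [integral_add, integral_add, integral_add, integral_add, integral_const_mul,
    integral_const_mul, integral_const_mul] at hF
  · linarith
  · exact i1
  · exact i2.const_mul ε
  · exact i1.add (i2.const_mul ε)
  · exact i3
  · exact (i1.add (i2.const_mul ε)).add i3
  · exact iA.const_mul ε
  · exact ((i1.add (i2.const_mul ε)).add i3).add (iA.const_mul ε)
  · exact iB.const_mul (2 * ε)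
end
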